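/- Let κ be an uncountable cardinal with κ^{<κ} = κ and let T be a tournament of cardinality κ that is κ-universal (every tournament of cardinality strictly less than κ embeds into T) and κ-ultrahomogeneous (every isomorphism between two subtournaments of T of cardinality strictly less than κ extends to an automorphism of T). Then Aut(T) is not universal: there exists a subset A of the vertices of T such that there is no injective continuous group homomorphism from the automorphism group of the subtournament induced on A into Aut(T). -/

import Mathlib

/-- The topology of pointwise convergence on the permutation group of a set `V`
(regarded as a discrete space): the topology induced from the product topology
on `V → V` where `V` carries the discrete topology. -/
instance permPointwiseTopology (V : Type*) : TopologicalSpace (Equiv.Perm V) :=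
  TopologicalSpace.induced (fun g : Equiv.Perm V => (g : V → V))
    (@Pi.topologicalSpace V (fun _ => V) (fun _ => ⊥))

/-- The automorphism group of a binary relational structure `(V, r)`, realized as the
subgroup of `Equiv.Perm V` of permutations preserving the relation `r` in both directions. -/
def relAut {V : Type*} (r : V → V → Prop) : Subgroup (Equiv.Perm V) where
  carrier := {g : Equiv.Perm V | ∀ x y : V, r (g x) (g y) ↔ r x y}
  one_mem' := fun _ _ => Iff.rfl
  mul_mem' := by
    intro a b ha hb x y
    exact (ha (b x) (b y)).trans (hb x y)
  inv_mem' := by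
    intro a ha x y
    have h := (ha (a⁻¹ x) (a⁻¹ y)).symm
    simpa using h

/-- A tournament: an irreflexive binary relation such that for any two distinct vertices
exactly one of `x → y`, `y → x` holds. -/
def IsTournament {V : Type*} (r : V → V → Prop) : Prop :=
  (∀ x, ¬ r x x) ∧ ∀ x y : V, x ≠ y → Xor' (r x y) (r y x)

/-!
The tournament `T` satisfies a one-point extension property over countable sets of vertices, and
this forces every sequence `t` in `Aut(T)` converging to `1` to be eventually equal to `1`. Indeed,
suppose that infinitely many `t n` are nontrivial. Each vertex is fixed by almost all `t n`, so on
passing to a subsequence there are vertices `x k` such that no `x i` is of the form `t k (x k)`.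
Take `v` with `v → x k` and `t k (x k) → v` for all `k`. An automorphism `t k` fixing `v` would give
`v → t k (x k)`, so no `t k` fixes `v`, contradicting convergence.

On the other hand, `(ℚ, <)` embeds into `T`, and the automorphisms of `ℚ` that fix `(-∞, n]` and
dilate `[n, ∞)` about `n` are nontrivial but converge to `1`. A continuous injective homomorphism
would carry this sequence to a nontrivial sequence in `Aut(T)` converging to `1`.
-/

open Filter Topology

section Tournament

variable {V : Type*} {r : V → V → Prop}

theorem IsTournament.asymm (hr : IsTournament r) : Std.Asymm r where
  asymm x y hxy hyx := by
    have hne : x ≠ y := fun h => hr.1 x (h ▸ hxy)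
    rcases hr.2 x y hne with h | h
    exacts [h.2 hyx, h.2 hxy]

/-- The relation `r` extended by a point `none` that dominates exactly the points of `D` and is
dominated by all others; for a tournament, every one-point extension is of this form. -/
def onePointExtension (r : V → V → Prop) (D : Set V) : Option V → Option V → Prop
  | none, none => False
  | none, some y => y ∈ D
  | some x, none => x ∉ D
  | some x, some y => r x y

theorem IsTournament.onePointExtension (hr : IsTournament r) (D : Set V) :
    IsTournament (onePointExtension r D) := by
  refine ⟨?_, ?_⟩
  · rintro (_ | x)
    exacts [id, hr.1 x]
  · rintro (_ | x) (_ | y) hne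
    · exact absurd rfl hne
    · exact xor_not_right.2 Iff.rfl
    · exact xor_not_left.2 Iff.rfl
    · exact hr.2 x y (hne <| congrArg some ·)

/-- The isomorphism of a relation embedded into `r` with the relation induced by `r` on the
image. -/
noncomputable def rangeRelIso {W : Type*} {s : W → W → Prop} (φ : s ↪r r) :
    s ≃r (fun a b : Set.range φ => r a b) where
  toEquiv := Equiv.ofInjective φ φ.injective
  map_rel_iff' := φ.map_rel_iff

end Tournament

section CountableExtension

/-- The one-point extension property over countable sets, the analogue for tournaments of the
extension property of the Rado graph. -/
def HasCountableExtension {V : Type*} (r : V → V → Prop) : Prop :=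
  ∀ A B : Set V, A.Countable → B.Countable → Disjoint A B →
    ∃ v, (∀ a ∈ A, r v a) ∧ ∀ b ∈ B, r b v

open Cardinal in
/-- `κ`-universality among tournaments: every tournament of cardinality less than `κ` embeds
into `r`. -/
def IsUniversalTournament {V : Type u} (κ : Cardinal.{u}) (r : V → V → Prop) : Prop :=
  ∀ (W : Type u) (s : W → W → Prop), IsTournament s → #W < κ → Nonempty (s ↪r r)

open Cardinal in
/-- `κ`-ultrahomogeneity: isomorphisms between induced substructures of cardinality less than `κ`
extend to automorphisms. -/
def IsUltrahomogeneous {V : Type u} (κ : Cardinal.{u}) (r : V → V → Prop) : Prop :=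
  ∀ A B : Set V, #A < κ → #B < κ →
    ∀ f : (fun a b : A => r a b) ≃r (fun a b : B => r a b),
      ∃ g : r ≃r r, ∀ a : A, g (a : V) = (f a : V)

open Cardinal in
theorem IsUltrahomogeneous.exists_relEmbedding_extending {V W : Type u} {r : V → V → Prop}
    {s : W → W → Prop} {κ : Cardinal.{u}} (hhom : IsUltrahomogeneous κ r) {C : Set V}
    (hC : #C < κ) (i : (fun a b : C => r a b) ↪r s) (φ : s ↪r r) :
    ∃ ψ : s ↪r r, ∀ c : C, ψ (i c) = c := by
  let j := rangeRelIso (i.trans φ)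
  obtain ⟨g, hg⟩ := hhom _ C (mk_range_le.trans_lt hC) hC j.symm
  refine ⟨φ.trans g.toRelEmbedding, fun c => ?_⟩
  calc g (φ (i c)) = j.symm (j c) := hg (j c)
    _ = c := by rw [j.symm_apply_apply]

theorem IsUniversalTournament.hasCountableExtension {V : Type u} {r : V → V → Prop}
    {κ : Cardinal.{u}} (huniv : IsUniversalTournament κ r) (hhom : IsUltrahomogeneous κ r)
    (hr : IsTournament r) (hκ : Cardinal.aleph0 < κ) : HasCountableExtension r := by
  intro A B hA hB hAB
  let C : Set V := A ∪ B
  have : Countable C := (hA.union hB).to_subtype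
  let s : Option C → Option C → Prop :=
    onePointExtension (fun a b : C => r a b) {c | (c : V) ∈ A}
  have hrC : IsTournament (fun a b : C => r a b) :=
    ⟨fun a => hr.1 a, fun a b hne => hr.2 a b (Subtype.coe_injective.ne hne)⟩
  obtain ⟨φ⟩ := huniv _ s (hrC.onePointExtension _) (Cardinal.mk_le_aleph0.trans_lt hκ)
  let i : (fun a b : C => r a b) ↪r s := ⟨Function.Embedding.some, Iff.rfl⟩
  obtain ⟨ψ, hψ⟩ := hhom.exists_relEmbedding_extending (Cardinal.mk_le_aleph0.trans_lt hκ) i φ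
  refine ⟨ψ none, fun a ha => ?_, fun b hb => ?_⟩
  · have hs : s none (i ⟨a, Or.inl ha⟩) := ha
    simpa only [hψ] using ψ.map_rel_iff.2 hs
  · have hs : s (i ⟨b, Or.inr hb⟩) none := hAB.notMem_of_mem_right hb
    simpa only [hψ] using ψ.map_rel_iff.2 hs

theorem exists_fun_of_wellFoundedLT {α β : Type*} [Preorder α] [WellFoundedLT α]
    {P : ∀ a : α, (Set.Iio a → β) → β → Prop} (h : ∀ a f, ∃ y, P a f y) :
    ∃ F : α → β, ∀ a, P a (fun b => F b) (F a) := by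
  choose next hnext using h
  let F : α → β := wellFounded_lt.fix fun a f => next a fun b => f b b.2
  refine ⟨F, fun a => ?_⟩
  have hF : F a = next a fun b => F b := wellFounded_lt.fix_eq _ a
  rw [hF]
  exact hnext a _

variable {V W : Type*} {r : V → V → Prop} [Countable W]

/-- The recursion does not know that `F` is injective on `Set.Iio w`, so `F u` can only be asked to
dominate `F w` when it is not also the image of some `u'` with `s w u'`. -/
theorem HasCountableExtension.exists_fun_lt [Preorder W] [WellFoundedLT W]
    (h : HasCountableExtension r) (s : W → W → Prop) :
    ∃ F : W → V, ∀ u w, u < w → (s w u → r (F w) (F u)) ∧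
      ((∃ u' < w, s w u' ∧ F u' = F u) ∨ r (F u) (F w)) := by
  let out {w : W} (f : Set.Iio w → V) : Set V := f '' {u | s w u}
  obtain ⟨F, hF⟩ := exists_fun_of_wellFoundedLT (α := W) (β := V)
    (P := fun _ f v => (∀ a ∈ out f, r v a) ∧ ∀ b ∈ Set.range f \ out f, r b v) fun w f =>
      h (out f) (Set.range f \ out f) ((Set.to_countable _).image f)
        ((Set.countable_range f).mono Set.sdiff_subset) Set.disjoint_sdiff_right
  refine ⟨F, fun u w hlt => ⟨fun hs => (hF w).1 _ ⟨⟨u, hlt⟩, hs, rfl⟩, ?_⟩⟩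
  refine or_iff_not_imp_left.2 fun hnot => (hF w).2 _ ⟨⟨⟨u, hlt⟩, rfl⟩, ?_⟩
  rintro ⟨u', hs, heq⟩
  exact hnot ⟨u', u'.2, hs, heq⟩

theorem HasCountableExtension.nonempty_relEmbedding {s : W → W → Prop} [Std.Asymm r] [Std.Asymm s]
    [Std.Trichotomous s] (h : HasCountableExtension r) : Nonempty (s ↪r r) := by
  obtain ⟨_, _⟩ := exists_wellFoundedLT W
  obtain ⟨F, hF⟩ := h.exists_fun_lt s
  have hne : ∀ u w, u < w → F u ≠ F w := by
    intro u w hlt heq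
    rcases (hF u w hlt).2 with ⟨u', hlt', hs, heq'⟩ | hr
    · have hr : r (F w) (F u') := (hF u' w hlt').1 hs
      rw [heq', heq] at hr
      exact asymm hr hr
    · rw [heq] at hr
      exact asymm hr hr
  have hinj : Function.Injective F := .of_lt_imp_ne hne
  refine ⟨RelEmbedding.ofMonotone F fun u w hs => ?_⟩
  rcases lt_trichotomy u w with hlt | rfl | hgt
  · refine (hF u w hlt).2.resolve_left ?_
    rintro ⟨u', -, hs', heq⟩
    exact asymm hs (hinj heq ▸ hs')
  · exact (asymm hs hs).elim
  · exact (hF w u hgt).1 hs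

end CountableExtension

section Automorphism

variable {V : Type*} {r : V → V → Prop}

theorem tendsto_relAut_nhds_iff {ι : Type*} {l : Filter ι} {t : ι → relAut r} {g : relAut r} :
    Tendsto t l (𝓝 g) ↔ ∀ x, ∀ᶠ i in l, (t i : Equiv.Perm V) x = (g : Equiv.Perm V) x := by
  let : TopologicalSpace V := ⊥
  have : DiscreteTopology V := ⟨rfl⟩
  rw [tendsto_subtype_rng, nhds_induced, tendsto_comap_iff, tendsto_pi_nhds]
  simp only [nhds_discrete, tendsto_pure, Function.comp_apply]

/-- A self-isomorphism of `r` in Mathlib's bundled form, viewed as an element of `relAut r`. -/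
def relAut.ofRelIso (f : r ≃r r) : relAut r :=
  ⟨f.toEquiv, fun _ _ => f.map_rel_iff⟩

theorem exists_strictMono_disjoint_range {t : ℕ → Equiv.Perm V}
    (ht : ∀ x, ∀ᶠ n in atTop, t n x = x) (hne : ∃ᶠ n in atTop, t n ≠ 1) :
    ∃ (k : ℕ → ℕ) (x : ℕ → V), StrictMono k ∧
      Disjoint (Set.range x) (Set.range fun i => t (k i) (x i)) := by
  obtain ⟨p, hmoved, hlt⟩ := exists_seq_of_forall_finset_exists
    (fun p : ℕ × V => t p.1 p.2 ≠ p.2)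
    (fun p q : ℕ × V => p.1 < q.1 ∧ p.2 ≠ t q.1 q.2 ∧ t p.1 p.2 ≠ q.2) <| by
      intro S _
      have hfix : ∀ᶠ n in atTop, ∀ p ∈ S,
          p.1 < n ∧ t n p.2 = p.2 ∧ t n (t p.1 p.2) = t p.1 p.2 :=
        (eventually_all_finset S).2 fun p _ =>
          (eventually_gt_atTop p.1).and ((ht p.2).and (ht (t p.1 p.2)))
      obtain ⟨n, hn, hS⟩ := (hne.and_eventually hfix).exists
      obtain ⟨y, hy⟩ : ∃ y, t n y ≠ y := by simpa [Equiv.ext_iff] using hn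
      refine ⟨(n, y), hy, fun p hp => ⟨(hS p hp).1, fun h => ?_, fun h => ?_⟩⟩
      · have : p.2 = y := (t n).injective ((hS p hp).2.1.trans h)
        exact hy (h.symm.trans this)
      · have : t p.1 p.2 = y := h
        exact hy (this ▸ (hS p hp).2.2)
  refine ⟨fun i => (p i).1, fun i => (p i).2, fun i j hij => (hlt i j hij).1, ?_⟩
  rw [Set.disjoint_range_iff]
  intro i j
  rcases lt_trichotomy i j with hij | rfl | hji
  exacts [(hlt i j hij).2.1, (hmoved i).symm, (hlt j i hji).2.2.symm]

theorem HasCountableExtension.eventually_eq_one_of_tendsto [Std.Asymm r]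
    (h : HasCountableExtension r) {t : ℕ → relAut r} (ht : Tendsto t atTop (𝓝 1)) :
    ∀ᶠ n in atTop, t n = 1 := by
  by_contra hne
  have hfix : ∀ x, ∀ᶠ n in atTop, (t n : Equiv.Perm V) x = x := tendsto_relAut_nhds_iff.1 ht
  obtain ⟨k, x, hk, hdisj⟩ := exists_strictMono_disjoint_range hfix <|
    (not_eventually.1 hne).mono fun n hn => mt OneMemClass.coe_eq_one.1 hn
  obtain ⟨v, hx, htx⟩ := h _ _ (Set.countable_range _) (Set.countable_range _) hdisj
  obtain ⟨i, hi⟩ := (hk.tendsto_atTop.eventually (hfix v)).exists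
  have hv : r v ((t (k i) : Equiv.Perm V) (x i)) := by
    simpa only [hi] using ((t (k i)).2 v (x i)).2 (hx _ ⟨i, rfl⟩)
  exact asymm hv (htx _ ⟨i, rfl⟩)

end Automorphism

section Dilation

variable {K : Type*} [Field K] [LinearOrder K] [IsStrictOrderedRing K]

/-- The order automorphism of `K` that fixes `(-∞, c]` pointwise and is the dilation with factor
`2` about `c` on `[c, ∞)`. -/
def dilationAbove (c : K) : K ≃o K where
  toFun x := max x (2 * x - c)
  invFun x := min x ((x + c) / 2)
  left_inv x := by
    simp only [max_def, min_def]
    split_ifs <;> linarith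
  right_inv x := by
    simp only [max_def, min_def]
    split_ifs <;> linarith
  map_rel_iff' {x y} := by
    simp only [Equiv.coe_fn_mk, max_def]
    split_ifs <;> constructor <;> intro <;> linarith

theorem dilationAbove_of_le {c x : K} (h : x ≤ c) : dilationAbove c x = x :=
  max_eq_left (by linarith)

theorem dilationAbove_ne_self_of_lt {c x : K} (h : c < x) : dilationAbove c x ≠ x :=
  (lt_max_of_lt_right (by linarith)).ne'

theorem exists_tendsto_one_forall_ne_one [Archimedean K] {V : Type*} {r : V → V → Prop}
    (φ : ((· < ·) : K → K → Prop) ≃r r) :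
    ∃ t : ℕ → relAut r, Tendsto t atTop (𝓝 1) ∧ ∀ n, t n ≠ 1 := by
  refine ⟨fun n => relAut.ofRelIso
    ((φ.symm.trans (dilationAbove (n : K)).toRelIsoLT).trans φ), ?_, fun n hn => ?_⟩
  · refine tendsto_relAut_nhds_iff.2 fun x => ?_
    filter_upwards [tendsto_natCast_atTop_atTop.eventually_ge_atTop (φ.symm x)] with n hn
    calc φ (dilationAbove (n : K) (φ.symm x)) = φ (φ.symm x) := by rw [dilationAbove_of_le hn]
      _ = x := φ.apply_symm_apply x
  · have hfix : φ (dilationAbove (n : K) (φ.symm (φ (n + 1)))) = φ (n + 1) :=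
      DFunLike.congr_fun (congrArg Subtype.val hn) (φ (n + 1))
    rw [φ.symm_apply_apply] at hfix
    exact dilationAbove_ne_self_of_lt (lt_add_one (n : K)) (φ.injective hfix)

end Dilation

theorem randomTournamentAut_not_universal_general {V : Type*} (r : V → V → Prop) [Std.Asymm r]
    (hext : HasCountableExtension r) :
    ∃ A : Set V,
      ¬ ∃ e : relAut (fun a b : A => r a b) →* relAut r,
          Function.Injective e ∧ Continuous e := by
  obtain ⟨φ⟩ := hext.nonempty_relEmbedding (s := ((· < ·) : ℚ → ℚ → Prop))
  obtain ⟨t, ht, hne⟩ := exists_tendsto_one_forall_ne_one (rangeRelIso φ)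
  refine ⟨Set.range φ, fun ⟨e, hinj, hcont⟩ => ?_⟩
  have het : Tendsto (fun n => e (t n)) atTop (𝓝 1) :=
    (hcont.tendsto' 1 1 (map_one e)).comp ht
  obtain ⟨n, hn⟩ := (hext.eventually_eq_one_of_tendsto het).exists
  exact hne n ((map_eq_one_iff e hinj).1 hn)

open Cardinal in
/-- Let `κ` be an uncountable cardinal with `κ^{<κ} = κ` and let `T = (V, r)` be a
tournament of cardinality `κ` which is `κ`-universal (every tournament of cardinality `< κ`
embeds into it) and `κ`-ultrahomogeneous (every isomorphism between two subtournaments of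
cardinality `< κ` extends to an automorphism). Then `Aut(T)` is not universal: there is a
set `A` of vertices such that there is no injective continuous group homomorphism from the
automorphism group of the subtournament induced on `A` into `Aut(T)` (both with the
pointwise convergence topology). -/
theorem randomTournamentAut_not_universal
    {V : Type u} (r : V → V → Prop) (hT : IsTournament r) (κ : Cardinal.{u})
    (hκ : Cardinal.aleph0 < κ) (hpow : κ ^< κ = κ)
    (hcard : #V = κ)
    (huniv : ∀ (W : Type u) (s : W → W → Prop), IsTournament s → #W < κ →
      Nonempty (s ↪r r))
    (hhom : ∀ A B : Set V, #A < κ → #B < κ →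
      ∀ f : (fun a b : A => r a b) ≃r (fun a b : B => r a b),
      ∃ g : r ≃r r, ∀ a : A, g (a : V) = (f a : V)) :
    ∃ A : Set V,
      ¬ ∃ e : relAut (fun a b : A => r a b) →* relAut r,
          Function.Injective e ∧ Continuous e := by
  have := hT.asymm
  exact randomTournamentAut_not_universal_general r
    (IsUniversalTournament.hasCountableExtension huniv hhom hT hκ)
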